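/- arXiv:1809.06784 — 2 statements merged into one kernel-verified Lean document; each statement's English description precedes it below -/
import Mathlib

section
/- Let G and H be nonempty sets and J : G × H → ℝ a payoff function of a zero-sum game, where the maximizer chooses g ∈ G and the minimizer chooses h ∈ H. Fix ε > 0, and let G(Θ) ⊆ G and H(Ξ) ⊆ H be subsets (parametrized approximating classes) such that: (i) for every h ∈ H there exists h_ξ ∈ H(Ξ) with |J(g, h) − J(g, h_ξ)| ≤ ε for all g ∈ G, and (ii) for every g ∈ G there exists g_θ ∈ G(Θ) with |J(g_θ, h) − J(g, h)| ≤ ε for all h ∈ H. Then for every saddle-point equilibrium (g*, h*) of the game (i.e., J(g, h*) ≤ J(g*, h*) ≤ J(g*, h) for all g ∈ G, h ∈ H), there exists a pair (g_{θ*}, h_{ξ*}) ∈ G(Θ) × H(Ξ) that is a 3ε-Nash equilibrium of the game, i.e., J(g_{θ*}, h_{ξ*}) ≤ J(g_{θ*}, h) + 3ε for all h ∈ H, and J(g_{θ*}, h_{ξ*}) ≥ J(g, h_{ξ*}) − 3ε for all g ∈ G. -/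
theorem approx_nash_of_saddle_point
    {G H : Type*} [Nonempty G] [Nonempty H]
    (J : G → H → ℝ) (ε : ℝ) (hε : 0 < ε)
    (GΘ : Set G) (HΞ : Set H)
    (hH : ∀ h : H, ∃ hξ ∈ HΞ, ∀ g : G, |J g h - J g hξ| ≤ ε)
    (hG : ∀ g : G, ∃ gθ ∈ GΘ, ∀ h : H, |J gθ h - J g h| ≤ ε)
    (gs : G) (hs : H)
    (hsaddle : ∀ g : G, ∀ h : H, J g hs ≤ J gs hs ∧ J gs hs ≤ J gs h) :
    ∃ gθ ∈ GΘ, ∃ hξ ∈ HΞ,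
      (∀ h : H, J gθ hξ ≤ J gθ h + 3 * ε) ∧
      (∀ g : G, J g hξ - 3 * ε ≤ J gθ hξ) := by
  obtain ⟨hξ, hξm, h1⟩ := hH hs
  obtain ⟨gθ, gθm, h2⟩ := hG gs
  refine ⟨gθ, gθm, hξ, hξm, fun h => ?_, fun g => ?_⟩
  · have a := abs_le.mp (h1 gθ)
    have b := abs_le.mp (h2 h)
    have c := hsaddle gθ h
    linarith [a.1, b.1, c.1, c.2]
  · have a := abs_le.mp (h1 g)
    have b := abs_le.mp (h2 hξ)
    have c := hsaddle g hξ
    linarith [a.1, b.1, c.1, c.2]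
end

section
/- Let G and H be nonempty sets and J : G × H → ℝ, and let ε > 0. Suppose G' ⊆ G and H' ⊆ H are subsets such that for every h ∈ H there exists h' ∈ H' with |J(g, h) − J(g, h')| ≤ ε for all g ∈ G, and for every g ∈ G there exists g' ∈ G' with |J(g', h) − J(g, h)| ≤ ε for all h ∈ H. If (g*, h*) ∈ G × H is a saddle-point equilibrium of J (i.e., J(g, h*) ≤ J(g*, h*) ≤ J(g*, h) for all g ∈ G, h ∈ H), then there exist ĝ ∈ G' and ĥ ∈ H' such that for all g' ∈ G' and h' ∈ H', J(g', ĥ) − 3ε ≤ J(ĝ, ĥ) ≤ J(ĝ, h') + 3ε; that is, (ĝ, ĥ) is a 3ε-Nash equilibrium of the restricted game on G' × H'. -/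
theorem restricted_approx_nash_of_saddle_point
    {G H : Type*} [Nonempty G] [Nonempty H]
    (J : G → H → ℝ) (ε : ℝ) (hε : 0 < ε)
    (G' : Set G) (H' : Set H)
    (hH : ∀ h : H, ∃ h' ∈ H', ∀ g : G, |J g h - J g h'| ≤ ε)
    (hG : ∀ g : G, ∃ g' ∈ G', ∀ h : H, |J g' h - J g h| ≤ ε)
    (gs : G) (hs : H)
    (hsaddle : ∀ g : G, ∀ h : H, J g hs ≤ J gs hs ∧ J gs hs ≤ J gs h) :
    ∃ ghat ∈ G', ∃ hhat ∈ H',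
      ∀ g' ∈ G', ∀ h' ∈ H',
        J g' hhat - 3 * ε ≤ J ghat hhat ∧ J ghat hhat ≤ J ghat h' + 3 * ε := by
  obtain ⟨b, hb, hb'⟩ := hH hs
  obtain ⟨a, ha, ha'⟩ := hG gs
  refine ⟨a, ha, b, hb, fun g' _ h' _ => ?_⟩
  have h1 := abs_le.mp (hb' g')
  have h2 := abs_le.mp (hb' a)
  have h3 := abs_le.mp (ha' b)
  have h4 := abs_le.mp (ha' h')
  have s1 := hsaddle g' b
  have s2 := hsaddle a h'
  constructor
  · linarith [h1.1, h3.1, s1.1, s1.2]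
  · linarith [h2.1, h4.1, s2.1, s2.2]
end
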